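/- arXiv:1807.00234 — 3 statements merged into one kernel-verified Lean document; each statement's English description precedes it below -/
import Mathlib

section
/- Let κ < κ* be iteration numbers and let c ∈ ⋂ i, C i. Then ‖x^{κ*} − c‖² ≤ ‖x^κ − c‖² − ‖x^{κ*} − x^κ‖² / (∑_{k=κ}^{κ*−1} maxLength(w^k)). -/
/-!
The proof rests on one relation between points `a`, `b` relative to `c`: `b` is no farther from
`c` than `a`, and `‖b - a‖² ≤ t (‖a - c‖² - ‖b - c‖²)`. A single projection satisfies it with
`t = 1` (obtuse angle criterion). By Cauchy–Schwarz it composes, the constants `t` adding up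
(`Decrease.trans`), so a string of `m` projections satisfies it with `t = m`. Since `‖· - z‖²` is
convex, it passes to convex combinations of the endpoint `b` (`Decrease.sum`), so one step of the
iteration satisfies it with `t = maxLen (w k)`. Composing the steps from `κ` to `κstar` gives the
relation with the sum of these constants, and dividing by that sum gives the claim.
-/

open Metric Filter Topology

noncomputable section

/-- `projSeq P ι x` applies the projections `P ι₁, …, P ι_m` in order, i.e. it is
`P[ι](x) = (P ι_m ∘ ⋯ ∘ P ι₁) x`. -/
def projSeq {α : Type*} (P : ℕ → α → α) (ι : List ℕ) (x : α) : α :=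
  ι.foldl (fun y i => P i y) x

/-- A weight function: finitely supported, values in `[0,1]`, supported on nonempty
lists (index vectors), with total sum `1`. -/
def IsWeightFn (w : List ℕ → ℝ) : Prop :=
  (∀ ι, 0 ≤ w ι) ∧ (∀ ι, w ι ≤ 1) ∧ (Function.support w).Finite ∧
    (∀ ι, w ι ≠ 0 → ι ≠ []) ∧ (∑ᶠ ι, w ι) = 1

/-- `maxLen w` is the maximum length of an index vector used (given positive weight)
by the weight function `w`. -/
def maxLen (w : List ℕ → ℝ) : ℕ :=
  sSup (List.length '' Function.support w)

/-- Passing from `a` to `b` does not increase the distance to `c`, and the squared length of the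
step is at most `t` times the decrease of the squared distance to `c`. -/
def Decrease {E : Type*} [NormedAddCommGroup E] (c a b : E) (t : ℝ) : Prop :=
  ‖b - c‖ ^ 2 ≤ ‖a - c‖ ^ 2 ∧ ‖b - a‖ ^ 2 ≤ t * (‖a - c‖ ^ 2 - ‖b - c‖ ^ 2)

theorem Decrease.refl {E : Type*} [NormedAddCommGroup E] (c a : E) : Decrease c a a 0 := by
  simp [Decrease]

theorem Decrease.mono {E : Type*} [NormedAddCommGroup E] {c a b : E} {s t : ℝ}
    (h : Decrease c a b s) (hst : s ≤ t) : Decrease c a b t :=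
  ⟨h.1, h.2.trans (mul_le_mul_of_nonneg_right hst (sub_nonneg.2 h.1))⟩

/-- The constants add under composition: this is the Cauchy–Schwarz inequality
`(√(s p) + √(t q))² ≤ (s + t) (p + q)`. -/
theorem Decrease.trans {E : Type*} [NormedAddCommGroup E] {c a b d : E} {s t : ℝ}
    (hs : 0 ≤ s) (ht : 0 ≤ t) (h₁ : Decrease c a b s) (h₂ : Decrease c b d t) :
    Decrease c a d (s + t) := by
  refine ⟨h₂.1.trans h₁.1, ?_⟩
  obtain ⟨p0, hU⟩ := h₁
  obtain ⟨q0, hV⟩ := h₂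
  have htri : ‖d - a‖ ≤ ‖b - a‖ + ‖d - b‖ := by
    have := norm_add_le (b - a) (d - b)
    rwa [show b - a + (d - b) = d - a by abel] at this
  obtain ⟨p, hp⟩ : ∃ p, p = ‖a - c‖ ^ 2 - ‖b - c‖ ^ 2 := ⟨_, rfl⟩
  obtain ⟨q, hq⟩ : ∃ q, q = ‖b - c‖ ^ 2 - ‖d - c‖ ^ 2 := ⟨_, rfl⟩
  have hpq : ‖a - c‖ ^ 2 - ‖d - c‖ ^ 2 = p + q := by rw [hp, hq]; ring
  have hp0 : 0 ≤ p := by rw [hp]; linarith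
  have hq0 : 0 ≤ q := by rw [hq]; linarith
  rw [← hp] at hU
  rw [← hq] at hV
  rw [hpq]
  have hcross : 2 * (‖b - a‖ * ‖d - b‖) ≤ s * q + t * p := by
    refine abs_le_of_sq_le_sq' ?_ (by positivity) |>.2
    have := mul_le_mul hU hV (sq_nonneg _) (by positivity)
    nlinarith [sq_nonneg (s * q - t * p)]
  calc ‖d - a‖ ^ 2 ≤ (‖b - a‖ + ‖d - b‖) ^ 2 := by gcongr
    _ ≤ (s + t) * (p + q) := by nlinarith

theorem norm_sum_smul_sub_sq_le {E : Type*} [NormedAddCommGroup E] [NormedSpace ℝ E]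
    {α : Type*} (S : Finset α) (v : α → ℝ) (p : α → E) (z : E)
    (hv : ∀ i ∈ S, 0 ≤ v i) (hv1 : ∑ i ∈ S, v i = 1) :
    ‖∑ i ∈ S, v i • p i - z‖ ^ 2 ≤ ∑ i ∈ S, v i * ‖p i - z‖ ^ 2 := by
  have hcv : ConvexOn ℝ Set.univ (fun y : E => ‖y‖ ^ 2) :=
    (convexOn_univ_norm (E := E)).pow (fun _ _ => norm_nonneg _) 2
  have := hcv.map_sum_le (p := fun i => p i - z) hv hv1 (fun _ _ => Set.mem_univ _)
  simpa [smul_sub, Finset.sum_sub_distrib, ← Finset.sum_smul, hv1] using this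

/-- The relation is stable under convex combinations of the endpoint. -/
theorem Decrease.sum {E : Type*} [NormedAddCommGroup E] [NormedSpace ℝ E]
    {α : Type*} (S : Finset α) (v : α → ℝ) (p : α → E) {c a : E} {t : ℝ} (ht : 0 ≤ t)
    (hv : ∀ i ∈ S, 0 ≤ v i) (hv1 : ∑ i ∈ S, v i = 1)
    (h : ∀ i ∈ S, Decrease c a (p i) t) : Decrease c a (∑ i ∈ S, v i • p i) t := by
  have hc := norm_sum_smul_sub_sq_le S v p c hv hv1
  have ha := norm_sum_smul_sub_sq_le S v p a hv hv1
  have e : ∑ i ∈ S, v i * ‖a - c‖ ^ 2 = ‖a - c‖ ^ 2 := by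
    rw [← Finset.sum_mul, hv1, one_mul]
  constructor
  · refine hc.trans (le_of_le_of_eq (Finset.sum_le_sum fun i hi => ?_) e)
    exact mul_le_mul_of_nonneg_left (h i hi).1 (hv i hi)
  · calc _ ≤ ∑ i ∈ S, v i * ‖p i - a‖ ^ 2 := ha
      _ ≤ ∑ i ∈ S, v i * (t * (‖a - c‖ ^ 2 - ‖p i - c‖ ^ 2)) :=
        Finset.sum_le_sum fun i hi => mul_le_mul_of_nonneg_left (h i hi).2 (hv i hi)
      _ = t * (‖a - c‖ ^ 2 - ∑ i ∈ S, v i * ‖p i - c‖ ^ 2) := by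
        nth_rewrite 2 [← e]
        rw [← Finset.sum_sub_distrib, Finset.mul_sum]
        exact Finset.sum_congr rfl fun i _ => by ring
      _ ≤ _ := by gcongr

theorem decrease_of_isNearest {E : Type*} [NormedAddCommGroup E] [InnerProductSpace ℝ E]
    {K : Set E} (hK : Convex ℝ K) {a b c : E} (hb : b ∈ K)
    (hmin : ∀ y ∈ K, ‖a - b‖ ≤ ‖a - y‖) (hc : c ∈ K) : Decrease c a b 1 := by
  have hinf : ‖a - b‖ = ⨅ y : K, ‖a - y‖ := by
    have : Nonempty K := ⟨⟨b, hb⟩⟩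
    refine le_antisymm (le_ciInf fun y => hmin y y.2) ?_
    exact ciInf_le (f := fun y : K => ‖a - y‖)
      ⟨0, by rintro _ ⟨y, rfl⟩; exact norm_nonneg _⟩ ⟨b, hb⟩
  have hin := (norm_eq_iInf_iff_real_inner_le_zero hK hb).1 hinf c hc
  have hexp : ‖a - c‖ ^ 2 = ‖a - b‖ ^ 2 - 2 * inner ℝ (a - b) (c - b) + ‖b - c‖ ^ 2 := by
    rw [← norm_sub_rev c b, ← norm_sub_sq_real, sub_sub_sub_cancel_right]
  rw [Decrease, norm_sub_rev b a]
  constructor <;> nlinarith [sq_nonneg ‖a - b‖]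

theorem decrease_projSeq {E : Type*} [NormedAddCommGroup E] {P : ℕ → E → E} {c : E}
    (h : ∀ i a, Decrease c a (P i a) 1) (ι : List ℕ) (a : E) :
    Decrease c a (projSeq P ι a) ι.length := by
  induction ι generalizing a with
  | nil => simpa [projSeq] using Decrease.refl c a
  | cons i l ih =>
    have := Decrease.trans zero_le_one (Nat.cast_nonneg l.length) (h i a) (ih (P i a))
    simpa [projSeq, add_comm] using this

theorem length_le_maxLen {w : List ℕ → ℝ} (hw : (Function.support w).Finite) {ι : List ℕ}
    (hι : ι ∈ Function.support w) : ι.length ≤ maxLen w :=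
  le_csSup (hw.image _).bddAbove (Set.mem_image_of_mem _ hι)

theorem decrease_step {E : Type*} [NormedAddCommGroup E] [NormedSpace ℝ E]
    {P : ℕ → E → E} {c : E} (h : ∀ i a, Decrease c a (P i a) 1) {w : List ℕ → ℝ}
    (hw : IsWeightFn w) (a : E) :
    Decrease c a (∑ᶠ ι, w ι • projSeq P ι a) (maxLen w) := by
  obtain ⟨h0, -, hfin, -, h1⟩ := hw
  rw [finsum_eq_sum_of_support_subset (s := hfin.toFinset) _ (by simp)] at h1
  rw [finsum_eq_sum_of_support_subset (s := hfin.toFinset) _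
    (by rw [hfin.coe_toFinset]; exact Function.support_smul_subset_left _ _)]
  refine Decrease.sum _ _ _ (Nat.cast_nonneg _) (fun i _ => h0 i) h1 fun ι hι => ?_
  exact (decrease_projSeq h ι a).mono
    (Nat.cast_le.2 (length_le_maxLen hfin (hfin.mem_toFinset.1 hι)))

theorem stmt10
    (n : ℕ) (hn : 0 < n) (C : ℕ → Set (EuclideanSpace ℝ (Fin n)))
    (hCne : ∀ i, (C i).Nonempty) (hCcl : ∀ i, IsClosed (C i))
    (hCcv : ∀ i, Convex ℝ (C i)) (hCint : (⋂ i, C i).Nonempty)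
    (P : ℕ → EuclideanSpace ℝ (Fin n) → EuclideanSpace ℝ (Fin n))
    (hP : ∀ i x, P i x ∈ C i ∧ ∀ y ∈ C i, ‖x - P i x‖ ≤ ‖x - y‖)
    (w : ℕ → List ℕ → ℝ) (hw : ∀ k, IsWeightFn (w k))
    (x : ℕ → EuclideanSpace ℝ (Fin n))
    (hx : ∀ k, x (k + 1) = ∑ᶠ ι, w k ι • projSeq P ι (x k))
    (κ κstar : ℕ) (hκ : κ < κstar)
    (c : EuclideanSpace ℝ (Fin n)) (hc : c ∈ ⋂ i, C i) :
    ‖x κstar - c‖ ^ 2 ≤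
      ‖x κ - c‖ ^ 2 -
        ‖x κstar - x κ‖ ^ 2 / ∑ k ∈ Finset.Ico κ κstar, (maxLen (w k) : ℝ) := by
  have hproj : ∀ i a, Decrease c a (P i a) 1 := fun i a =>
    decrease_of_isNearest (hCcv i) (hP i a).1 (hP i a).2 (Set.mem_iInter.1 hc i)
  have key : Decrease c (x κ) (x κstar) (∑ k ∈ Finset.Ico κ κstar, (maxLen (w k) : ℝ)) := by
    induction κstar, hκ.le using Nat.le_induction with
    | base => simpa using Decrease.refl c (x κ)
    | succ m hm ih =>
      rw [Finset.sum_Ico_succ_top hm]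
      have hstep : Decrease c (x m) (x (m + 1)) (maxLen (w m)) := by
        rw [hx m]
        exact decrease_step hproj (hw m) (x m)
      refine Decrease.trans (Finset.sum_nonneg fun _ _ => Nat.cast_nonneg _)
        (Nat.cast_nonneg _) ?_ hstep
      rcases hm.eq_or_lt with rfl | hlt
      · simpa using Decrease.refl c (x κ)
      · exact ih hlt
  -- `div_le_of_le_mul₀` covers a vanishing denominator too, by monotonicity of the distance.
  have hdiv := div_le_of_le_mul₀
    (Finset.sum_nonneg fun k (_ : k ∈ Finset.Ico κ κstar) => Nat.cast_nonneg (maxLen (w k)))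
    (sub_nonneg.2 key.1) (key.2.trans_eq (mul_comm _ _))
  linarith
end
end

section
/- Let M = 2 · d(x^0, ⋂ i, C i). For s ∈ ℝⁿ, let I⁻(s) denote the set of index vectors ι that contain at least one index i with s ∉ C i. Then for all iteration numbers r₁ < r₂ and every s ∈ ℝⁿ, ‖x^{r₂} − s‖ ≤ ‖x^{r₁} − s‖ + M · ∑_{k=r₁}^{r₂−1} ∑_{ι ∈ I⁻(s)} w^k(ι). -/
/-!
A metric projection onto a closed convex set does not increase the distance to any point of that
set, so `P[ι]` does not increase the distance to a point lying in every `C i` with `i ∈ ι`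
(`norm_projSeq_sub_le`). Hence, for one iteration step, the terms with `ι ∉ I⁻(s)` contribute at
most `w ι * ‖x - s‖`. For `ι ∈ I⁻(s)`, comparison with a point `z ∈ ⋂ i, C i` gives
`‖P[ι] x - x‖ ≤ 2 * ‖x - z‖`, so these terms cost at most an additional `2 * ‖x - z‖ * w ι`. This is
`norm_step_sub_le`; taking `s = z` there makes `I⁻(s)` empty and shows that `‖x k - z‖` is
nonincreasing in `k`. Choosing `z` to be a point of `⋂ i, C i` nearest to `x 0` and summing over
the steps gives the theorem.
-/

open Metric Filter Topology

noncomputable section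

section

variable {E : Type*} [NormedAddCommGroup E] [InnerProductSpace ℝ E]

lemma norm_proj_sub_le {K : Set E} (hK : Convex ℝ K) {x v c : E} (hv : v ∈ K)
    (hmin : ∀ y ∈ K, ‖x - v‖ ≤ ‖x - y‖) (hc : c ∈ K) : ‖v - c‖ ≤ ‖x - c‖ := by
  have : Nonempty K := ⟨⟨v, hv⟩⟩
  have hinf : ‖x - v‖ = ⨅ y : K, ‖x - y‖ := by
    apply le_antisymm
    · exact le_ciInf fun y => hmin y y.2
    · exact ciInf_le (f := fun y : K => ‖x - y‖)
        ⟨0, by rintro _ ⟨y, rfl⟩; exact norm_nonneg _⟩ ⟨v, hv⟩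
  have hin := (norm_eq_iInf_iff_real_inner_le_zero hK hv).1 hinf c hc
  have hexp := norm_sub_sq_real (x - v) (c - v)
  rw [sub_sub_sub_cancel_right, norm_sub_rev c v] at hexp
  exact le_of_sq_le_sq (by nlinarith [sq_nonneg ‖x - v‖]) (norm_nonneg _)

lemma norm_projSeq_sub_le {C : ℕ → Set E} (hC : ∀ i, Convex ℝ (C i)) {P : ℕ → E → E}
    (hP : ∀ i x, P i x ∈ C i ∧ ∀ y ∈ C i, ‖x - P i x‖ ≤ ‖x - y‖) {c : E} (l : List ℕ)
    (hc : ∀ i ∈ l, c ∈ C i) (x : E) : ‖projSeq P l x - c‖ ≤ ‖x - c‖ := by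
  induction l generalizing x with
  | nil => exact le_rfl
  | cons i l ih =>
    exact (ih (fun j hj => hc j (List.mem_cons_of_mem _ hj)) (P i x)).trans
      (norm_proj_sub_le (hC i) (hP i x).1 (hP i x).2 (hc i List.mem_cons_self))

/-- One iteration step. The reference point `z` of the common intersection is arbitrary, and `s`
may equal `z`. -/
lemma norm_step_sub_le {C : ℕ → Set E} (hC : ∀ i, Convex ℝ (C i)) {P : ℕ → E → E}
    (hP : ∀ i x, P i x ∈ C i ∧ ∀ y ∈ C i, ‖x - P i x‖ ≤ ‖x - y‖) {w : List ℕ → ℝ}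
    (hw : IsWeightFn w) {z : E} (hz : z ∈ ⋂ i, C i) (x s : E) :
    ‖(∑ᶠ ι, w ι • projSeq P ι x) - s‖ ≤
      ‖x - s‖ + 2 * ‖x - z‖ * ∑ᶠ ι ∈ {l : List ℕ | ∃ i ∈ l, s ∉ C i}, w ι := by
  classical
  obtain ⟨hnn, -, hfin, -, hsum⟩ := hw
  have hF : Function.support w ⊆ hfin.toFinset := by simp
  rw [finsum_eq_sum_of_support_subset w hF] at hsum
  rw [finsum_eq_sum_of_support_subset (fun ι => w ι • projSeq P ι x)
      ((Function.support_smul_subset_left w _).trans hF),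
    finsum_mem_def, finsum_eq_sum_of_support_subset _
      ((Set.support_indicator.trans_subset Set.inter_subset_right).trans hF)]
  generalize hfin.toFinset = F at hsum ⊢
  set J := {l : List ℕ | ∃ i ∈ l, s ∉ C i}
  have hterm : ∀ ι, ‖projSeq P ι x - s‖ ≤
      ‖x - s‖ + 2 * ‖x - z‖ * J.indicator 1 ι := by
    intro ι
    by_cases hι : ι ∈ J
    · rw [Set.indicator_of_mem hι, Pi.one_apply]
      have h1 := norm_projSeq_sub_le hC hP ι (fun i _ => Set.mem_iInter.1 hz i) x
      have h2 := norm_sub_le_norm_sub_add_norm_sub (projSeq P ι x) z s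
      have h3 := norm_sub_le_norm_sub_add_norm_sub z x s
      rw [norm_sub_rev z x] at h3
      linarith
    · rw [Set.indicator_of_notMem hι]
      have h1 := norm_projSeq_sub_le hC hP ι (c := s)
        (fun i hi => by_contra fun h => hι ⟨i, hi, h⟩) x
      linarith
  have hs : (∑ ι ∈ F, w ι • projSeq P ι x) - s = ∑ ι ∈ F, w ι • (projSeq P ι x - s) := by
    simp_rw [smul_sub, Finset.sum_sub_distrib, ← Finset.sum_smul, hsum, one_smul]
  rw [hs]
  calc ‖∑ ι ∈ F, w ι • (projSeq P ι x - s)‖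
      ≤ ∑ ι ∈ F, w ι * (‖x - s‖ + 2 * ‖x - z‖ * J.indicator 1 ι) := by
        refine norm_sum_le_of_le _ fun ι _ => ?_
        rw [norm_smul, Real.norm_of_nonneg (hnn ι)]
        exact mul_le_mul_of_nonneg_left (hterm ι) (hnn ι)
    _ = (∑ ι ∈ F, w ι) * ‖x - s‖ + 2 * ‖x - z‖ * ∑ ι ∈ F, J.indicator w ι := by
        rw [Finset.sum_mul, Finset.mul_sum, ← Finset.sum_add_distrib]
        refine Finset.sum_congr rfl fun ι _ => ?_
        by_cases hι : ι ∈ J <;> simp [hι] <;> ring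
    _ = _ := by rw [hsum, one_mul]

end

theorem stmt14
    (n : ℕ) (hn : 0 < n) (C : ℕ → Set (EuclideanSpace ℝ (Fin n)))
    (hCne : ∀ i, (C i).Nonempty) (hCcl : ∀ i, IsClosed (C i))
    (hCcv : ∀ i, Convex ℝ (C i)) (hCint : (⋂ i, C i).Nonempty)
    (P : ℕ → EuclideanSpace ℝ (Fin n) → EuclideanSpace ℝ (Fin n))
    (hP : ∀ i x, P i x ∈ C i ∧ ∀ y ∈ C i, ‖x - P i x‖ ≤ ‖x - y‖)
    (w : ℕ → List ℕ → ℝ) (hw : ∀ k, IsWeightFn (w k))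
    (x : ℕ → EuclideanSpace ℝ (Fin n))
    (hx : ∀ k, x (k + 1) = ∑ᶠ ι, w k ι • projSeq P ι (x k))
    (r₁ r₂ : ℕ) (hr : r₁ < r₂) (s : EuclideanSpace ℝ (Fin n)) :
    ‖x r₂ - s‖ ≤
      ‖x r₁ - s‖ +
        2 * infDist (x 0) (⋂ i, C i) *
          ∑ k ∈ Finset.Ico r₁ r₂,
            ∑ᶠ ι ∈ {l : List ℕ | ∃ i ∈ l, s ∉ C i}, w k ι := by
  obtain ⟨z, hz, hdist⟩ := (isClosed_iInter hCcl).exists_infDist_eq_dist hCint (x 0)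
  rw [hdist, dist_eq_norm]
  have hstep : ∀ k t, ‖x (k + 1) - t‖ ≤ ‖x k - t‖ + 2 * ‖x k - z‖ *
      ∑ᶠ ι ∈ {l : List ℕ | ∃ i ∈ l, t ∉ C i}, w k ι := fun k t => by
    rw [hx k]; exact norm_step_sub_le hCcv hP (hw k) hz (x k) t
  have hmono : ∀ k, ‖x k - z‖ ≤ ‖x 0 - z‖ := by
    intro k
    induction k with
    | zero => exact le_rfl
    | succ k ih =>
      have hempty : {l : List ℕ | ∃ i ∈ l, z ∉ C i} = ∅ := by
        ext l
        simp [Set.mem_iInter.1 hz]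
      have h := hstep k z
      rw [hempty, finsum_mem_empty, mul_zero, add_zero] at h
      exact h.trans ih
  have hnonneg : ∀ k, 0 ≤ ∑ᶠ ι ∈ {l : List ℕ | ∃ i ∈ l, s ∉ C i}, w k ι := fun k =>
    finsum_nonneg fun ι => finsum_nonneg fun _ => (hw k).1 ι
  induction r₂, hr.le using Nat.le_induction with
  | base => simp
  | succ m hm ih =>
    rcases hm.eq_or_lt with rfl | hlt
    · simp only [Nat.Ico_succ_singleton, Finset.sum_singleton]
      have := mul_le_mul_of_nonneg_right (hmono r₁) (hnonneg r₁)
      linarith [hstep r₁ s]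
    · rw [Finset.sum_Ico_succ_top hm, mul_add]
      have := mul_le_mul_of_nonneg_right (hmono m) (hnonneg m)
      linarith [hstep m s, ih hlt]
end
end

section
/- Fourth Convergence Theorem, part 1: Suppose ∑_{k=0}^∞ ‖v^k‖ < ∞. If ⋂ i, C i contains an n-dimensional simplex (equivalently, being convex, has nonempty interior) or UASC holds, then the sequence (x_*^k) converges to some limit L ∈ ℝⁿ, and L ∈ C j for every index j for which the series ∑_{k=0}^∞ ∑_{ι ∈ I⟨j⟩} w^k(ι) diverges (i.e. the nonnegative sequence k ↦ ∑_{ι ∈ I⟨j⟩} w^k(ι) is not summable). In particular, under either hypothesis, if this series diverges for every index j with C j ≠ ℝⁿ, then (x_*^k) converges to a point of ⋂ i, C i. -/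
/-!
The sequence `x` is quasi-Fejér with respect to every point `z` of `⋂ i, C i`. Call
`g ι x = ‖x - z‖² - ‖P[ι] x - z‖² ≥ 0` the *gain* of the index vector `ι` at `x`. Convexity of the
squared norm together with the summability of the perturbations gives
`∑ k, ∑ ι, w k ι * g ι (x k) < ∞` (`summable_gain`). Consequently, the weight carried by any family
of index vectors whose gain is bounded below by a positive constant is summable
(`summable_weight_of_gain`).

If `⋂ i, C i` contains a closed ball of radius `r` around `z`, then `2 r ‖x - P[ι] x‖ ≤ g ι x`
(`two_mul_norm_sub_le`), so the increments of `x` are summable and `x` converges to some `L`. If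
`L ∉ C j` then, near `L`, an index vector through `j` has to travel a definite distance to reach
`C j`, so its gain is bounded below and the weight of `I⟨j⟩` is summable.

Under UASC, let `p` be a cluster point of `x`; all the sets `C i` that miss `p` stay at distance at
least `δ > 0` from `p`. Near `p`, an index vector using only sets containing `p` does not increase
the distance to `p`, while every other one contains a jump of length at least `δ / 2` and so has
gain at least `(δ / 2)²` (`gain_of_far`). The total weight of the latter, over those `k` with `x k`
near `p`, is therefore finite, and `‖x k - p‖` grows only by summable amounts while it is small.
As `p` is a cluster point, this forces `x → p` (`tendsto_zero_of_frequently_small`). The gain bound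
also shows that the weight of `I⟨j⟩` is summable whenever `p ∉ C j`.
-/

open Metric Filter Topology

noncomputable section

/-! ### Two facts on real sequences -/

theorem summable_of_le_telescope {G u e : ℕ → ℝ} (hG : ∀ k, 0 ≤ G k) (hu : ∀ k, 0 ≤ u k)
    (he0 : ∀ k, 0 ≤ e k) (he : Summable e) (h : ∀ k, G k ≤ u k - u (k + 1) + e k) :
    Summable G := by
  refine summable_of_sum_range_le (c := u 0 + ∑' k, e k) hG fun N => ?_
  have h1 : ∑ k ∈ Finset.range N, G k ≤ (u 0 - u N) + ∑ k ∈ Finset.range N, e k := by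
    rw [← Finset.sum_range_sub', ← Finset.sum_add_distrib]
    exact Finset.sum_le_sum fun k _ => h k
  have h2 := he.sum_le_tsum (Finset.range N) fun k _ => he0 k
  have h3 := hu N
  linarith

/-- A nonnegative sequence that comes arbitrarily close to `0` infinitely often, and that grows only
by summable amounts while it is below `δ`, tends to `0`. -/
theorem tendsto_zero_of_frequently_small {a e : ℕ → ℝ} {δ : ℝ} (hδ : 0 < δ) (ha : ∀ k, 0 ≤ a k)
    (he0 : ∀ k, 0 ≤ e k) (he : Summable e) (h : ∀ k, a k < δ → a (k + 1) ≤ a k + e k)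
    (hfreq : ∀ ε > 0, ∃ᶠ k in atTop, a k < ε) : Tendsto a atTop (𝓝 0) := by
  rw [Metric.tendsto_atTop]
  intro ε hε
  set η := min ε δ with hη
  have hη0 : 0 < η := lt_min hε hδ
  have htail := tendsto_sum_nat_add e
  have hev : ∀ᶠ k in atTop, ∑' m, e (m + k) < η / 2 := htail.eventually_lt_const (by linarith)
  obtain ⟨K, hK1, hK2⟩ := ((hfreq (η / 2) (by linarith)).and_eventually hev).exists
  have hsum : Summable fun m => e (m + K) := (summable_nat_add_iff K).2 he
  have hpart : ∀ m, ∑ i ∈ Finset.range m, e (i + K) < η / 2 := fun m =>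
    (hsum.sum_le_tsum (Finset.range m) fun i _ => he0 _).trans_lt hK2
  have key : ∀ m, a (m + K) ≤ a K + ∑ i ∈ Finset.range m, e (i + K) := by
    intro m
    induction m with
    | zero => simp
    | succ m ih =>
      have h1 : a (m + K) < δ := by
        have := hpart m
        have := min_le_right ε δ
        linarith
      have h2 := h _ h1
      rw [Finset.sum_range_succ, show m + 1 + K = m + K + 1 by ring]
      linarith
  refine ⟨K, fun k hk => ?_⟩
  obtain ⟨m, rfl⟩ := Nat.exists_eq_add_of_le' hk
  rw [Real.dist_eq, sub_zero, abs_of_nonneg (ha _)]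
  have := key m
  have := hpart m
  have := min_le_left ε δ
  linarith

/-! ### Gains of compositions of projections -/

theorem projSeq_append {α : Type*} {P : ℕ → α → α} (s t : List ℕ) (x : α) :
    projSeq P (s ++ t) x = projSeq P t (projSeq P s x) := by
  simp [projSeq]

theorem projSeq_cons {α : Type*} {P : ℕ → α → α} (i : ℕ) (t : List ℕ) (x : α) :
    projSeq P (i :: t) x = projSeq P t (P i x) := by
  simp [projSeq]

section Projections

variable {E : Type*} [NormedAddCommGroup E] [InnerProductSpace ℝ E]

theorem proj_sq_le {K : Set E} (hK : Convex ℝ K) {x y z : E} (hy : y ∈ K)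
    (hmin : ∀ u ∈ K, ‖x - y‖ ≤ ‖x - u‖) (hz : z ∈ K) :
    ‖y - z‖ ^ 2 + ‖x - y‖ ^ 2 ≤ ‖x - z‖ ^ 2 := by
  have heq : ‖x - y‖ = ⨅ u : K, ‖x - u‖ := by
    have : Nonempty K := ⟨⟨y, hy⟩⟩
    refine le_antisymm (le_ciInf fun u => hmin u u.2) ?_
    exact ciInf_le ⟨0, by rintro _ ⟨u, rfl⟩; exact norm_nonneg _⟩ (⟨y, hy⟩ : K)
  have hin := (norm_eq_iInf_iff_real_inner_le_zero hK hy).1 heq z hz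
  have hexp := norm_sub_sq_real (x - y) (z - y)
  rw [sub_sub_sub_cancel_right, norm_sub_rev z y] at hexp
  linarith

variable {C : ℕ → Set E} {P : ℕ → E → E}

/-- `P[ι]` is Fejér monotone with respect to each point lying in all the sets indexed by `ι`. -/
theorem projSeq_norm_le (hC : ∀ i, Convex ℝ (C i))
    (hP : ∀ i x, P i x ∈ C i ∧ ∀ y ∈ C i, ‖x - P i x‖ ≤ ‖x - y‖) {z : E} (ι : List ℕ)
    (hz : ∀ i ∈ ι, z ∈ C i) (x : E) : ‖projSeq P ι x - z‖ ≤ ‖x - z‖ := by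
  induction ι generalizing x with
  | nil => simp [projSeq]
  | cons i t ih =>
    rw [projSeq_cons]
    refine (ih (fun j hj => hz j (List.mem_cons_of_mem _ hj)) _).trans ?_
    have h := proj_sq_le (hC i) (hP i x).1 (hP i x).2 (hz i List.mem_cons_self)
    refine le_of_sq_le_sq ?_ (norm_nonneg _)
    nlinarith [sq_nonneg ‖x - P i x‖]

/-- If a map does not increase the distance to any point of the closed ball of radius `r` about `z`,
then the displacement `x - y` of `x ↦ y` is controlled by the decrease of the squared distance
to `z`. -/
theorem two_mul_norm_sub_le {x y z : E} {r : ℝ} (hr : 0 ≤ r)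
    (h : ∀ u ∈ closedBall z r, ‖y - u‖ ≤ ‖x - u‖) :
    2 * r * ‖x - y‖ ≤ ‖x - z‖ ^ 2 - ‖y - z‖ ^ 2 := by
  rcases eq_or_ne x y with rfl | hne
  · simp
  have hpos : 0 < ‖x - y‖ := norm_pos_iff.2 (sub_ne_zero.2 hne)
  -- The distance is tested at the point of the sphere in the direction `x - y`.
  set d : E := (r / ‖x - y‖) • (x - y) with hd
  have hmem : z + d ∈ closedBall z r := by
    rw [mem_closedBall, dist_eq_norm, add_sub_cancel_left, hd, norm_smul, Real.norm_eq_abs,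
      abs_of_nonneg (by positivity), div_mul_cancel₀ _ hpos.ne']
  have h1 := pow_le_pow_left₀ (norm_nonneg _) (h _ hmem) 2
  rw [← sub_sub, ← sub_sub, norm_sub_sq_real (y - z) d, norm_sub_sq_real (x - z) d] at h1
  have h2 : inner ℝ (x - z) d - inner ℝ (y - z) d = r * ‖x - y‖ := by
    rw [← inner_sub_left, sub_sub_sub_cancel_right, hd, inner_smul_right,
      real_inner_self_eq_norm_sq]
    field_simp
  linarith

/-- Close to `p`, an index vector meeting a set `C i` that misses `p` has gain at least `(δ / 2)²`
when all such sets are at distance at least `δ` from `p`: before their first occurrence the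
distance to `p` does not increase, so the first projection onto one of them is a jump of length at
least `δ / 2`. -/
theorem gain_of_far (hC : ∀ i, Convex ℝ (C i))
    (hP : ∀ i x, P i x ∈ C i ∧ ∀ y ∈ C i, ‖x - P i x‖ ≤ ‖x - y‖) {z p : E} {δ : ℝ} (hδ : 0 < δ)
    (hz : ∀ i, z ∈ C i) (hfar : ∀ i, p ∉ C i → ∀ y ∈ C i, δ ≤ ‖y - p‖) (ι : List ℕ)
    (hι : ∃ i ∈ ι, p ∉ C i) (x : E) (hx : ‖x - p‖ < δ / 2) :
    (δ / 2) ^ 2 ≤ ‖x - z‖ ^ 2 - ‖projSeq P ι x - z‖ ^ 2 := by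
  induction ι generalizing x with
  | nil => simp at hι
  | cons i t ih =>
    rw [projSeq_cons]
    have h := proj_sq_le (hC i) (hP i x).1 (hP i x).2 (hz i)
    by_cases hi : p ∈ C i
    · have hι' : ∃ j ∈ t, p ∉ C j := by
        obtain ⟨j, hj, hpj⟩ := hι
        rcases List.mem_cons.1 hj with rfl | hj
        · exact absurd hi hpj
        · exact ⟨j, hj, hpj⟩
      have hstep := projSeq_norm_le hC hP (z := p) [i] (by simpa using hi) x
      rw [projSeq_cons] at hstep
      have := ih hι' (P i x) (lt_of_le_of_lt hstep hx)
      nlinarith [sq_nonneg ‖x - P i x‖]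
    · have h1 := hfar i hi _ (hP i x).1
      have h2 : ‖P i x - p‖ ≤ ‖x - P i x‖ + ‖x - p‖ := by
        rw [norm_sub_rev x (P i x)]
        exact norm_sub_le_norm_sub_add_norm_sub _ _ _
      have h3 : δ / 2 ≤ ‖x - P i x‖ := by linarith
      have h4 := pow_le_pow_left₀ (by positivity) h3 2
      have h5 := pow_le_pow_left₀ (norm_nonneg _)
        (projSeq_norm_le hC hP t (fun j _ => hz j) (P i x)) 2
      linarith

/-- When `⋂ i, C i` contains the closed ball of radius `r` about `z`, an index vector through `j`
has gain at least `2 r δ` at every point at distance at least `δ` from `C j`. -/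
theorem gain_of_ball (hC : ∀ i, Convex ℝ (C i))
    (hP : ∀ i x, P i x ∈ C i ∧ ∀ y ∈ C i, ‖x - P i x‖ ≤ ‖x - y‖) {z : E} {r δ : ℝ} (hr : 0 ≤ r)
    (hball : ∀ i, closedBall z r ⊆ C i) {j : ℕ} (ι : List ℕ) (hι : j ∈ ι) (x : E)
    (hx : ∀ y ∈ C j, δ ≤ ‖x - y‖) :
    2 * r * δ ≤ ‖x - z‖ ^ 2 - ‖projSeq P ι x - z‖ ^ 2 := by
  obtain ⟨s, t, rfl⟩ := List.append_of_mem hι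
  have hsplit : projSeq P (s ++ j :: t) x = projSeq P t (P j (projSeq P s x)) := by
    rw [projSeq_append, projSeq_cons]
  have hpre : projSeq P (s ++ [j]) x = P j (projSeq P s x) := by
    rw [projSeq_append]; rfl
  rw [hsplit]
  set y := P j (projSeq P s x) with hy
  have h1 : 2 * r * ‖x - y‖ ≤ ‖x - z‖ ^ 2 - ‖y - z‖ ^ 2 := by
    refine two_mul_norm_sub_le hr fun u hu => ?_
    rw [← hpre]
    exact projSeq_norm_le hC hP _ (fun i _ => hball i hu) x
  have h2 := mul_le_mul_of_nonneg_left (hx y (hP j _).1) (by positivity : 0 ≤ 2 * r)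
  have h3 := pow_le_pow_left₀ (norm_nonneg _)
    (projSeq_norm_le hC hP t (fun i _ => hball i (mem_closedBall_self hr)) y) 2
  linarith

/-! ### Weighted averages -/

/-- The finite sums over a support of the weight function that replace the `finsum`s. -/
theorem IsWeightFn.exists_finset {w : List ℕ → ℝ} (hw : IsWeightFn w) :
    ∃ F : Finset (List ℕ), ∑ ι ∈ F, w ι = 1 ∧
      (∀ f : List ℕ → E, ∑ᶠ ι, w ι • f ι = ∑ ι ∈ F, w ι • f ι) ∧
      ∀ S : Set (List ℕ), ∑ᶠ ι ∈ S, w ι = ∑ ι ∈ F, S.indicator w ι := by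
  obtain ⟨-, -, hfin, -, hsum⟩ := hw
  refine ⟨hfin.toFinset, ?_, fun f => ?_, fun S => ?_⟩
  · rw [← hsum, finsum_eq_sum_of_support_subset]
    simp
  · refine finsum_eq_sum_of_support_subset _ ?_
    intro ι hι
    simp only [Function.mem_support] at hι
    simpa using fun h0 => hι (by simp [h0])
  · rw [finsum_mem_def]
    refine finsum_eq_sum_of_support_subset _ ?_
    intro ι hι
    simp only [Function.mem_support] at hι
    simpa using fun h0 => hι (by by_cases h : ι ∈ S <;> simp [h, h0])

theorem norm_average_sub_le {F : Finset (List ℕ)} {w : List ℕ → ℝ} (hw : ∀ ι, 0 ≤ w ι)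
    (h1 : ∑ ι ∈ F, w ι = 1) (f : List ℕ → E) (z : E) :
    ‖∑ ι ∈ F, w ι • f ι - z‖ ≤ ∑ ι ∈ F, w ι * ‖f ι - z‖ := by
  have : ∑ ι ∈ F, w ι • f ι - z = ∑ ι ∈ F, w ι • (f ι - z) := by
    simp only [smul_sub, Finset.sum_sub_distrib, ← Finset.sum_smul, h1, one_smul]
  rw [this]
  refine (norm_sum_le _ _).trans (Finset.sum_le_sum fun ι _ => ?_)
  rw [norm_smul, Real.norm_eq_abs, abs_of_nonneg (hw ι)]

theorem norm_average_sub_sq_le {F : Finset (List ℕ)} {w : List ℕ → ℝ} (hw : ∀ ι, 0 ≤ w ι)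
    (h1 : ∑ ι ∈ F, w ι = 1) (f : List ℕ → E) (z : E) :
    ‖∑ ι ∈ F, w ι • f ι - z‖ ^ 2 ≤ ∑ ι ∈ F, w ι * ‖f ι - z‖ ^ 2 := by
  refine (pow_le_pow_left₀ (norm_nonneg _) (norm_average_sub_le hw h1 f z) 2).trans ?_
  have := (convexOn_pow (𝕜 := ℝ) 2).map_sum_le (t := F) (w := w) (p := fun ι => ‖f ι - z‖)
    (fun ι _ => hw ι) h1 (fun ι _ => norm_nonneg _)
  simpa using this

/-! ### The perturbed iteration -/

variable {w : ℕ → List ℕ → ℝ} {F : ℕ → Finset (List ℕ)} {v x : ℕ → E}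

theorem iterate_bounded (hC : ∀ i, Convex ℝ (C i))
    (hP : ∀ i x, P i x ∈ C i ∧ ∀ y ∈ C i, ‖x - P i x‖ ≤ ‖x - y‖)
    (hw : ∀ k ι, 0 ≤ w k ι) (h1 : ∀ k, ∑ ι ∈ F k, w k ι = 1) (hv : Summable fun k => ‖v k‖)
    (hx : ∀ k, x (k + 1) = ∑ ι ∈ F k, w k ι • projSeq P ι (x k) + v k) {z : E}
    (hz : ∀ i, z ∈ C i) (k : ℕ) : ‖x k - z‖ ≤ ‖x 0 - z‖ + ∑' m, ‖v m‖ := by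
  have key : ∀ k, ‖x k - z‖ ≤ ‖x 0 - z‖ + ∑ m ∈ Finset.range k, ‖v m‖ := by
    intro k
    induction k with
    | zero => simp
    | succ k ih =>
      rw [hx k, Finset.sum_range_succ, add_sub_right_comm]
      have h2 := norm_average_sub_le (hw k) (h1 k) (fun ι => projSeq P ι (x k)) z
      have h3 : ∑ ι ∈ F k, w k ι * ‖projSeq P ι (x k) - z‖ ≤ ‖x k - z‖ := by
        calc _ ≤ ∑ ι ∈ F k, w k ι * ‖x k - z‖ := Finset.sum_le_sum fun ι _ =>
              mul_le_mul_of_nonneg_left (projSeq_norm_le hC hP ι (fun i _ => hz i) _) (hw k ι)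
          _ = ‖x k - z‖ := by rw [← Finset.sum_mul, h1 k, one_mul]
      have h4 := norm_add_le (∑ ι ∈ F k, w k ι • projSeq P ι (x k) - z) (v k)
      linarith
  have := hv.sum_le_tsum (Finset.range k) fun m _ => norm_nonneg _
  linarith [key k]

theorem summable_gain (hC : ∀ i, Convex ℝ (C i))
    (hP : ∀ i x, P i x ∈ C i ∧ ∀ y ∈ C i, ‖x - P i x‖ ≤ ‖x - y‖)
    (hw : ∀ k ι, 0 ≤ w k ι) (h1 : ∀ k, ∑ ι ∈ F k, w k ι = 1) (hv : Summable fun k => ‖v k‖)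
    (hx : ∀ k, x (k + 1) = ∑ ι ∈ F k, w k ι • projSeq P ι (x k) + v k) {z : E}
    (hz : ∀ i, z ∈ C i) :
    Summable fun k => ∑ ι ∈ F k, w k ι * (‖x k - z‖ ^ 2 - ‖projSeq P ι (x k) - z‖ ^ 2) := by
  set R := ‖x 0 - z‖ + ∑' m, ‖v m‖ with hR
  have hbd := iterate_bounded hC hP hw h1 hv hx hz
  have hgain : ∀ k ι, 0 ≤ ‖x k - z‖ ^ 2 - ‖projSeq P ι (x k) - z‖ ^ 2 := fun k ι =>
    sub_nonneg.2 (pow_le_pow_left₀ (norm_nonneg _) (projSeq_norm_le hC hP ι (fun i _ => hz i) _) 2)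
  have hR0 : 0 ≤ R := (norm_nonneg _).trans (hbd 0)
  refine summable_of_le_telescope (u := fun k => ‖x k - z‖ ^ 2) (e := fun k => 2 * R * ‖v k‖)
    (fun k => Finset.sum_nonneg fun ι _ => mul_nonneg (hw k ι) (hgain k ι))
    (fun k => sq_nonneg _) (fun k => by positivity) (hv.mul_left _) fun k => ?_
  have h2 := norm_average_sub_sq_le (hw k) (h1 k) (fun ι => projSeq P ι (x k)) z
  have h3 : ∑ ι ∈ F k, w k ι * (‖x k - z‖ ^ 2 - ‖projSeq P ι (x k) - z‖ ^ 2)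
      = ‖x k - z‖ ^ 2 - ∑ ι ∈ F k, w k ι * ‖projSeq P ι (x k) - z‖ ^ 2 := by
    simp only [mul_sub, Finset.sum_sub_distrib, ← Finset.sum_mul, h1 k, one_mul]
  set T := ∑ ι ∈ F k, w k ι • projSeq P ι (x k) with hT
  -- As `T - z = (x (k + 1) - z) - v k`, the perturbation costs at most `2 R ‖v k‖`.
  have h4 : ‖x (k + 1) - z‖ ≤ ‖T - z‖ + ‖v k‖ := by
    rw [hx k, add_sub_right_comm]
    exact norm_add_le _ _
  have h5 : ‖x (k + 1) - z‖ ≤ R := hbd (k + 1)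
  have h6 : ‖x (k + 1) - z‖ ^ 2 ≤ ‖T - z‖ ^ 2 + 2 * R * ‖v k‖ := by
    nlinarith [norm_nonneg (v k), norm_nonneg (T - z), norm_nonneg (x (k + 1) - z),
      mul_le_mul_of_nonneg_right h5 (norm_nonneg (v k)),
      sq_nonneg (‖x (k + 1) - z‖ - ‖T - z‖),
      mul_le_mul_of_nonneg_left h4 (norm_nonneg (x (k + 1) - z))]
  simp only [h3]
  linarith

theorem summable_weight_of_gain {z : E} (hw : ∀ k ι, 0 ≤ w k ι)
    (hF : ∀ k (S : Set (List ℕ)), ∑ᶠ ι ∈ S, w k ι = ∑ ι ∈ F k, S.indicator (w k) ι)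
    (hgain : ∀ k ι, 0 ≤ ‖x k - z‖ ^ 2 - ‖projSeq P ι (x k) - z‖ ^ 2)
    (hsum : Summable fun k =>
      ∑ ι ∈ F k, w k ι * (‖x k - z‖ ^ 2 - ‖projSeq P ι (x k) - z‖ ^ 2))
    {c : ℝ} (hc : 0 < c) (S : Set (List ℕ)) (A : Set ℕ)
    (h : ∀ k ∈ A, ∀ ι ∈ S, c ≤ ‖x k - z‖ ^ 2 - ‖projSeq P ι (x k) - z‖ ^ 2) :
    Summable (A.indicator fun k => ∑ᶠ ι ∈ S, w k ι) := by
  refine Summable.of_nonneg_of_le (fun k => ?_) (fun k => ?_) (hsum.mul_left c⁻¹)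
  · refine Set.indicator_nonneg (fun k _ => ?_) k
    rw [hF]
    exact Finset.sum_nonneg fun ι _ => Set.indicator_nonneg (fun ι _ => hw k ι) ι
  · refine Set.indicator_apply_le' (fun hk => ?_) (fun _ => ?_)
    · rw [hF, Finset.mul_sum]
      refine Finset.sum_le_sum fun ι _ => ?_
      refine Set.indicator_apply_le' (fun hι => ?_) (fun _ => ?_)
      · rw [inv_mul_eq_div, le_div_iff₀ hc]
        exact mul_le_mul_of_nonneg_left (h k hk ι hι) (hw k ι)
      · exact mul_nonneg (inv_nonneg.2 hc.le) (mul_nonneg (hw k ι) (hgain k ι))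
    · exact mul_nonneg (inv_nonneg.2 hc.le)
        (Finset.sum_nonneg fun ι _ => mul_nonneg (hw k ι) (hgain k ι))

theorem summable_of_indicator_eventually {A : Set ℕ} {f : ℕ → ℝ} (hf : Summable (A.indicator f))
    (hA : ∀ᶠ k in atTop, k ∈ A) : Summable f := by
  refine hf.congr_cofinite ?_
  rw [Nat.cofinite_eq_atTop]
  filter_upwards [hA] with k hk
  exact Set.indicator_of_mem hk f

end Projections

theorem stmt17
    (n : ℕ) (hn : 0 < n) (C : ℕ → Set (EuclideanSpace ℝ (Fin n)))
    (hCne : ∀ i, (C i).Nonempty) (hCcl : ∀ i, IsClosed (C i))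
    (hCcv : ∀ i, Convex ℝ (C i)) (hCint : (⋂ i, C i).Nonempty)
    (P : ℕ → EuclideanSpace ℝ (Fin n) → EuclideanSpace ℝ (Fin n))
    (hP : ∀ i x, P i x ∈ C i ∧ ∀ y ∈ C i, ‖x - P i x‖ ≤ ‖x - y‖)
    (w : ℕ → List ℕ → ℝ) (hw : ∀ k, IsWeightFn (w k))
    (v : ℕ → EuclideanSpace ℝ (Fin n)) (hv : Summable (fun k => ‖v k‖))
    (x : ℕ → EuclideanSpace ℝ (Fin n))
    (hx : ∀ k, x (k + 1) = (∑ᶠ ι, w k ι • projSeq P ι (x k)) + v k)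
    (hmain : (interior (⋂ i, C i)).Nonempty ∨
      ∀ p : EuclideanSpace ℝ (Fin n), p ∉ ⋂ i, C i →
        0 < infDist p (⋃ (i : ℕ) (_ : p ∉ C i), C i)) :
    ∃ L : EuclideanSpace ℝ (Fin n),
      Tendsto x atTop (𝓝 L) ∧
      (∀ j : ℕ, ¬ Summable (fun k => ∑ᶠ ι ∈ {l : List ℕ | j ∈ l}, w k ι) → L ∈ C j) ∧
      ((∀ j : ℕ, C j ≠ Set.univ →
          ¬ Summable (fun k => ∑ᶠ ι ∈ {l : List ℕ | j ∈ l}, w k ι)) →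
        L ∈ ⋂ i, C i) := by
  choose F h1 hF2 hF using fun k =>
    IsWeightFn.exists_finset (E := EuclideanSpace ℝ (Fin n)) (hw k)
  have hw0 : ∀ k ι, 0 ≤ w k ι := fun k => (hw k).1
  have hx' : ∀ k, x (k + 1) = ∑ ι ∈ F k, w k ι • projSeq P ι (x k) + v k := fun k => by
    rw [hx k, hF2 k]
  have hgain : ∀ z ∈ ⋂ i, C i, ∀ k ι, 0 ≤ ‖x k - z‖ ^ 2 - ‖projSeq P ι (x k) - z‖ ^ 2 :=
    fun z hz k ι => sub_nonneg.2 (pow_le_pow_left₀ (norm_nonneg _)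
      (projSeq_norm_le hCcv hP ι (fun i _ => Set.mem_iInter.1 hz i) _) 2)
  suffices hmem : ∃ L, Tendsto x atTop (𝓝 L) ∧
      ∀ j : ℕ, ¬ Summable (fun k => ∑ᶠ ι ∈ {l : List ℕ | j ∈ l}, w k ι) → L ∈ C j by
    obtain ⟨L, hL, hLC⟩ := hmem
    refine ⟨L, hL, hLC, fun hall => Set.mem_iInter.2 fun j => ?_⟩
    by_cases hj : C j = Set.univ
    · rw [hj]; trivial
    · exact hLC j (hall j hj)
  rcases hmain with ⟨z, hz⟩ | hU
  · obtain ⟨r, hr, hball⟩ := Metric.nhds_basis_closedBall.mem_iff.1 (mem_interior_iff_mem_nhds.1 hz)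
    have hballi : ∀ i, closedBall z r ⊆ C i := fun i => hball.trans (Set.iInter_subset _ i)
    have hzC : z ∈ ⋂ i, C i := interior_subset hz
    have hsum := summable_gain hCcv hP hw0 h1 hv hx' (Set.mem_iInter.1 hzC)
    have hcauchy : CauchySeq x := by
      refine cauchySeq_of_summable_dist ?_
      refine Summable.of_nonneg_of_le (fun _ => dist_nonneg) (fun k => ?_)
        ((hsum.mul_left (2 * r)⁻¹).add hv)
      have h2 := norm_average_sub_le (hw0 k) (h1 k) (fun ι => projSeq P ι (x k)) (x k)
      have h3 : ∑ ι ∈ F k, w k ι * ‖projSeq P ι (x k) - x k‖ ≤ (2 * r)⁻¹ *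
          ∑ ι ∈ F k, w k ι * (‖x k - z‖ ^ 2 - ‖projSeq P ι (x k) - z‖ ^ 2) := by
        rw [Finset.mul_sum]
        refine Finset.sum_le_sum fun ι _ => ?_
        have h4 : 2 * r * ‖x k - projSeq P ι (x k)‖ ≤
            ‖x k - z‖ ^ 2 - ‖projSeq P ι (x k) - z‖ ^ 2 :=
          two_mul_norm_sub_le hr.le fun u hu =>
            projSeq_norm_le hCcv hP ι (fun i _ => hballi i hu) _
        rw [inv_mul_eq_div, le_div_iff₀ (by positivity), norm_sub_rev]
        linarith [mul_le_mul_of_nonneg_left h4 (hw0 k ι)]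
      have h5 := norm_add_le (∑ ι ∈ F k, w k ι • projSeq P ι (x k) - x k) (v k)
      rw [dist_comm, dist_eq_norm, Nat.succ_eq_add_one, hx' k, add_sub_right_comm]
      linarith
    obtain ⟨L, hL⟩ := cauchySeq_tendsto_of_complete hcauchy
    refine ⟨L, hL, fun j hj => ?_⟩
    by_contra hLj
    obtain ⟨δ, hδ, hdisj⟩ := Metric.isOpen_iff.1 (hCcl j).isOpen_compl L hLj
    refine hj (summable_of_indicator_eventually (A := {k | ‖x k - L‖ < δ / 2})
      (summable_weight_of_gain hw0 hF (hgain z hzC) hsum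
        (c := 2 * r * (δ / 2)) (by positivity) _ _ ?_) ?_)
    · intro k hk ι hι
      refine gain_of_ball hCcv hP hr.le hballi ι hι _ fun y hy => ?_
      by_contra hlt
      refine hdisj (a := y) ?_ hy
      rw [mem_ball, dist_eq_norm]
      have h2 : ‖y - L‖ ≤ ‖x k - y‖ + ‖x k - L‖ := by
        rw [norm_sub_rev (x k) y]
        exact norm_sub_le_norm_sub_add_norm_sub _ _ _
      have hk' : ‖x k - L‖ < δ / 2 := hk
      linarith
    · have := Metric.tendsto_nhds.1 hL (δ / 2) (by positivity)
      simpa only [dist_eq_norm, Set.mem_ofPred_eq] using this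
  · obtain ⟨z, hzC⟩ := hCint
    have hz := Set.mem_iInter.1 hzC
    have hsum := summable_gain hCcv hP hw0 h1 hv hx' hz
    have hbd := iterate_bounded hCcv hP hw0 h1 hv hx' hz
    set R := ‖x 0 - z‖ + ∑' m, ‖v m‖ with hR
    obtain ⟨p, -, φ, hφ, hp⟩ := (isCompact_closedBall z R).tendsto_subseq
      (x := x) fun k => by rw [mem_closedBall, dist_eq_norm]; exact hbd k
    -- If `p ∈ ⋂ i, C i`, no set misses `p` and any `δ > 0` will do.
    obtain ⟨δ, hδ, hfar⟩ : ∃ δ : ℝ, 0 < δ ∧ ∀ i, p ∉ C i → ∀ y ∈ C i, δ ≤ ‖y - p‖ := by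
      by_cases hpC : p ∈ ⋂ i, C i
      · exact ⟨1, one_pos, fun i hi => absurd (Set.mem_iInter.1 hpC i) hi⟩
      · refine ⟨_, hU p hpC, fun i hi y hy => ?_⟩
        rw [← dist_eq_norm, dist_comm]
        exact infDist_le_dist_of_mem (Set.mem_iUnion₂.2 ⟨i, hi, hy⟩)
    set S : Set (List ℕ) := {ι | ∃ i ∈ ι, p ∉ C i} with hS
    set A : Set ℕ := {k | ‖x k - p‖ < δ / 2} with hA
    have hSA : Summable (A.indicator fun k => ∑ᶠ ι ∈ S, w k ι) :=
      summable_weight_of_gain hw0 hF (hgain z hzC) hsum (c := (δ / 2) ^ 2) (by positivity) S A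
        fun k hk ι hι => gain_of_far hCcv hP hδ hz hfar ι hι _ hk
    set D := R + ‖z - p‖ with hD
    have hD0 : 0 ≤ D := add_nonneg ((norm_nonneg _).trans (hbd 0)) (norm_nonneg _)
    have hlim : Tendsto (fun k => ‖x k - p‖) atTop (𝓝 0) := by
      refine tendsto_zero_of_frequently_small (δ := δ / 2)
        (e := fun k => ‖v k‖ + D * A.indicator (fun k => ∑ᶠ ι ∈ S, w k ι) k)
        (by positivity) (fun _ => norm_nonneg _) (fun k => ?_) (hv.add (hSA.mul_left D))
        (fun k hk => ?_) (fun ε hε => ?_)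
      · refine add_nonneg (norm_nonneg _) (mul_nonneg hD0 (Set.indicator_nonneg (fun k _ => ?_) k))
        rw [hF]
        exact Finset.sum_nonneg fun ι _ => Set.indicator_nonneg (fun ι _ => hw0 k ι) ι
      · rw [Set.indicator_of_mem (show k ∈ A from hk), hF k S]
        have h2 := norm_average_sub_le (hw0 k) (h1 k) (fun ι => projSeq P ι (x k)) p
        have h3 : ∑ ι ∈ F k, w k ι * ‖projSeq P ι (x k) - p‖ ≤
            ‖x k - p‖ + D * ∑ ι ∈ F k, S.indicator (w k) ι := by
          have h4 : ‖x k - p‖ = ∑ ι ∈ F k, w k ι * ‖x k - p‖ := by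
            rw [← Finset.sum_mul, h1 k, one_mul]
          rw [h4, Finset.mul_sum, ← Finset.sum_add_distrib]
          refine Finset.sum_le_sum fun ι _ => ?_
          -- A vector meeting a far set lands at distance at most `D` from `p`.
          by_cases hι : ι ∈ S
          · rw [Set.indicator_of_mem hι]
            have h5 : ‖projSeq P ι (x k) - p‖ ≤ D :=
              (norm_sub_le_norm_sub_add_norm_sub _ z _).trans (add_le_add_left
                ((projSeq_norm_le hCcv hP ι (fun i _ => hz i) _).trans (hbd k)) _)
            have h6 := mul_le_mul_of_nonneg_left h5 (hw0 k ι)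
            have h7 := mul_nonneg (hw0 k ι) (norm_nonneg (x k - p))
            linarith
          · rw [Set.indicator_of_notMem hι, mul_zero, add_zero]
            refine mul_le_mul_of_nonneg_left (projSeq_norm_le hCcv hP ι (fun i hi => ?_) _)
              (hw0 k ι)
            by_contra hpi
            exact hι ⟨i, hi, hpi⟩
        have h8 := norm_add_le (∑ ι ∈ F k, w k ι • projSeq P ι (x k) - p) (v k)
        rw [hx' k, add_sub_right_comm]
        linarith
      · have hev := Metric.tendsto_nhds.1 hp ε hε
        refine hφ.tendsto_atTop.frequently (p := fun k => ‖x k - p‖ < ε) ?_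
        refine Eventually.frequently ?_
        simpa only [dist_eq_norm, Function.comp_apply] using hev
    refine ⟨p, tendsto_iff_norm_sub_tendsto_zero.2 hlim, fun j hj => ?_⟩
    by_contra hpj
    refine hj (summable_of_indicator_eventually
      (summable_weight_of_gain hw0 hF (hgain z hzC) hsum (c := (δ / 2) ^ 2) (by positivity) _ A
        fun k hk ι hι => gain_of_far hCcv hP hδ hz hfar ι ⟨j, hι, hpj⟩ _ hk) ?_)
    exact hlim.eventually_lt_const (by positivity)
end
end
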